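/- Let $n\ge 2$, let $R$ be a commutative ring with a distinguished invertible element $v$ (for example $R=\mathbb Z[v^{\pm1}]$ or $R=\mathbb Q(v)$), and put $q=v^{2n}$, $q^{-1/n}=v^{-2}$. Write $\delta_{i,j}=1$ if $i=j$ and $0$ otherwise, and $\delta_{i<j}=1$ if $i<j$ and $0$ otherwise. Let $\mathcal R$ and the braiding matrix $\widehat{\mathcal R}$ be the $n^2\times n^2$ matrices over $R$, with rows and columns indexed by pairs in $\{1,\dots,n\}^2$, whose entries in row (upper indices) and column (lower indices) are $$\widehat{\mathcal R}^{ji}_{cd}=\mathcal R^{ij}_{cd}=q^{-1/n}\left(q^{\delta_{i,j}}\,\delta_{j,d}\,\delta_{i,c}+(q-q^{-1})\,\delta_{j<i}\,\delta_{j,c}\,\delta_{i,d}\right).$$ Let $\mathcal O_q(M(n))$ be the associative unital $R$-algebra generated by $u^i_j$ $(1\le i,j\le n)$ subject to the relations $(\mathbf u\otimes\mathbf u)\,\widehat{\mathcal R}=\widehat{\mathcal R}\,(\mathbf u\otimes\mathbf u)$, where $(\mathbf u\otimes\mathbf u)^{ik}_{jl}=u^i_ju^k_l$; that is, for all $i,j,k,l\in\{1,\dots,n\}$,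 $$\sum_{a,b=1}^n u^i_a u^k_b\,\widehat{\mathcal R}^{ab}_{jl}=\sum_{a,b=1}^n\widehat{\mathcal R}^{ik}_{ab}\,u^a_j u^b_l .$$ For $\sigma\in S_n$ let $\ell(\sigma)=\#\{(i,j): 1\le i<j\le n,\ \sigma(i)>\sigma(j)\}$. Then the two expansions of the quantum determinant agree in $\mathcal O_q(M(n))$: $$\sum_{\sigma\in S_n}(-q)^{\ell(\sigma)}\,u^1_{\sigma(1)}u^2_{\sigma(2)}\cdots u^n_{\sigma(n)}=\sum_{\sigma\in S_n}(-q)^{\ell(\sigma)}\,u^{\sigma(1)}_1u^{\sigma(2)}_2\cdots u^{\sigma(n)}_n .$$ -/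

import Mathlib

/-!
Quantum matrices over a commutative ring `R` with a distinguished invertible element `v`
(for instance `ℤ[v, v⁻¹]` or `ℚ(v)`), with `q = v ^ (2 n)` and `q ^ (1 / n) = v ^ 2`.
The indices `1, …, n` are realized by `Fin n`.
-/

namespace QuantumMatrix

/-- The quantum parameter `q = v ^ (2 n)`, as a unit of the ground ring. -/
def q {R : Type*} [CommRing R] (v : Rˣ) (n : ℕ) : Rˣ := v ^ (2 * n)

/-- The `R`-matrix `ℛ`; its entry in row `(i, j)` and column `(c, d)` is
`q^{-1/n} (q^{δ_{i,j}} δ_{j,d} δ_{i,c} + (q - q⁻¹) [j < i] δ_{j,c} δ_{i,d})`. -/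
def rMatrix {R : Type*} [CommRing R] (v : Rˣ) (n : ℕ) :
    Matrix (Fin n × Fin n) (Fin n × Fin n) R :=
  fun p r =>
    ((v ^ (-2 : ℤ) : Rˣ) : R) *
      ((if p.1 = p.2 then (q v n : R) else 1) *
          (if p.2 = r.2 then 1 else 0) * (if p.1 = r.1 then 1 else 0) +
        ((q v n : R) - ((q v n)⁻¹ : Rˣ)) * (if p.2 < p.1 then 1 else 0) *
          (if p.2 = r.1 then 1 else 0) * (if p.1 = r.2 then 1 else 0))

/-- The braiding matrix `ℛ̂`: its entry in row `(j, i)` and column `(c, d)` is the entry of `ℛ`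
in row `(i, j)` and column `(c, d)`. -/
def braiding {R : Type*} [CommRing R] (v : Rˣ) (n : ℕ) :
    Matrix (Fin n × Fin n) (Fin n × Fin n) R :=
  fun p r => rMatrix v n p.swap r

/-- The generator `u^i_j` of the free algebra on `n²` generators. -/
def gen (R : Type*) [CommRing R] (n : ℕ) (i j : Fin n) : FreeAlgebra R (Fin n × Fin n) :=
  FreeAlgebra.ι R (i, j)

/-- The relations `(𝐮 ⊗ 𝐮) ℛ̂ = ℛ̂ (𝐮 ⊗ 𝐮)`, entry by entry, where
`(𝐮 ⊗ 𝐮)^{(i,k)}_{(j,l)} = u^i_j u^k_l`. -/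
inductive Rel {R : Type*} [CommRing R] (v : Rˣ) (n : ℕ) :
    FreeAlgebra R (Fin n × Fin n) → FreeAlgebra R (Fin n × Fin n) → Prop
  | rtt (i j k l : Fin n) :
      Rel v n
        (∑ a : Fin n, ∑ b : Fin n, braiding v n (a, b) (j, l) • (gen R n i a * gen R n k b))
        (∑ a : Fin n, ∑ b : Fin n, braiding v n (i, k) (a, b) • (gen R n a j * gen R n b l))

/-- The quantum matrix algebra `𝒪_q(M(n))` over `R`. -/
abbrev OqM {R : Type*} [CommRing R] (v : Rˣ) (n : ℕ) : Type _ := RingQuot (Rel v n)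

/-- The generator `u^i_j` of `𝒪_q(M(n))`. -/
noncomputable def u {R : Type*} [CommRing R] (v : Rˣ) (n : ℕ) (i j : Fin n) : OqM v n :=
  RingQuot.mkAlgHom R (Rel v n) (gen R n i j)

/-- The inversion number of a permutation. -/
def invNum {n : ℕ} (σ : Equiv.Perm (Fin n)) : ℕ :=
  (Finset.univ.filter fun p : Fin n × Fin n => p.1 < p.2 ∧ σ p.2 < σ p.1).card

end QuantumMatrix

/-!
The monomials of the two expansions are matched by `σ ↦ σ⁻¹`, which preserves the inversion number.
Going from `u^1_{σ(1)} ⋯ u^n_{σ(n)}` to `u^{σ⁻¹(1)}_1 ⋯ u^{σ⁻¹(n)}_n` only changes the order of the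
factors, and the factors that trade places are those at the inversions of `σ`: an entry and another
one strictly below and to the left of it. For such a pair, the two correction terms
`(q - q⁻¹) u^i_j u^k_l` of the RTT relation cancel, so the entries commute.
-/

section Reordering

variable {ι M : Type*} [Monoid M]

theorem prod_map_orderedInsert_of_commute (r : ι → ι → Prop) [DecidableRel r] (f : ι → M) (a : ι)
    (l : List ι) (h : ∀ b ∈ l, r a b ∨ Commute (f a) (f b)) :
    ((l.orderedInsert r a).map f).prod = f a * (l.map f).prod := by
  induction l with
  | nil => rfl
  | cons b l ih =>
    obtain ⟨hb, hl⟩ := List.forall_mem_cons.1 h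
    by_cases hab : r a b
    · rw [List.orderedInsert, if_pos hab, List.map_cons, List.prod_cons]
    · have hcomm : Commute (f a) (f b) := hb.resolve_left hab
      rw [List.orderedInsert, if_neg hab, List.map_cons, List.map_cons, List.prod_cons,
        List.prod_cons, ih hl, hcomm.symm.left_comm]

theorem prod_map_insertionSort_of_commute (r : ι → ι → Prop) [DecidableRel r] (f : ι → M)
    (l : List ι) (h : l.Pairwise fun a b => r a b ∨ Commute (f a) (f b)) :
    ((l.insertionSort r).map f).prod = (l.map f).prod := by
  induction l with
  | nil => rfl
  | cons a l ih =>
    obtain ⟨ha, hl⟩ := List.pairwise_cons.1 h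
    rw [List.insertionSort_cons, prod_map_orderedInsert_of_commute, ih hl, List.map_cons,
      List.prod_cons]
    exact fun b hb => ha b ((List.mem_insertionSort r).1 hb)

theorem prod_map_eq_of_perm_of_commute [LinearOrder ι] (f : ι → M) {l l' : List ι}
    (hperm : l.Perm l') (hsorted : l'.SortedLE)
    (hcomm : l.Pairwise fun a b => b < a → Commute (f a) (f b)) :
    (l.map f).prod = (l'.map f).prod := by
  have hsort : l.insertionSort (· ≤ ·) = l' :=
    ((List.perm_insertionSort _ l).trans hperm).eq_of_pairwise' (List.pairwise_insertionSort _ l)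
      hsorted.pairwise
  rw [← hsort, prod_map_insertionSort_of_commute]
  exact hcomm.imp fun {a b} hab => (le_or_gt a b).imp_right hab

theorem prod_map_finRange_comp_perm_of_commute {n : ℕ} (σ : Equiv.Perm (Fin n)) (f : Fin n → M)
    (h : ∀ i j, i < j → σ j < σ i → Commute (f (σ i)) (f (σ j))) :
    ((List.finRange n).map fun i => f (σ i)).prod = ((List.finRange n).map f).prod := by
  have hcomm : ((List.finRange n).map σ).Pairwise fun a b => b < a → Commute (f a) (f b) :=
    List.pairwise_map.2 ((List.pairwise_lt_finRange n).imp fun {i j} => h i j)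
  simpa only [List.map_map] using! prod_map_eq_of_perm_of_commute f (σ.map_finRange_perm)
    (List.sortedLT_finRange n).sortedLE hcomm

end Reordering

namespace QuantumMatrix

theorem invNum_inv {n : ℕ} (σ : Equiv.Perm (Fin n)) : invNum σ⁻¹ = invNum σ :=
  Finset.card_equiv ((Equiv.prodComm _ _).trans (Equiv.prodCongr σ⁻¹ σ⁻¹)) fun p => by
    simp [and_comm]

variable {R : Type*} [CommRing R] (v : Rˣ) (n : ℕ)

theorem braiding_apply (p r : Fin n × Fin n) :
    braiding v n p r = ((v ^ (-2 : ℤ) : Rˣ) : R) *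
      ((if p.swap = r then if p.1 = p.2 then (q v n : R) else 1 else 0) +
        if p = r then if p.1 < p.2 then (q v n : R) - ((q v n)⁻¹ : Rˣ) else 0 else 0) := by
  simp only [braiding, rMatrix, Prod.ext_iff, Prod.fst_swap, Prod.snd_swap]
  grind

theorem braiding_isSymm : (braiding v n).IsSymm :=
  Matrix.IsSymm.ext fun p r => by
    simp only [braiding_apply, Prod.ext_iff, Prod.fst_swap, Prod.snd_swap]
    grind

theorem sum_braiding_smul {M : Type*} [AddCommMonoid M] [Module R M] (p : Fin n × Fin n)
    (x : Fin n × Fin n → M) :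
    ∑ r, braiding v n p r • x r =
      v ^ (-2 : ℤ) • ((if p.1 = p.2 then (q v n : R) else 1) • x p.swap +
        (if p.1 < p.2 then (q v n : R) - ((q v n)⁻¹ : Rˣ) else 0) • x p) := by
  simp only [braiding_apply, mul_smul, add_smul, ← Finset.smul_sum, Finset.sum_add_distrib,
    ite_smul, zero_smul, Finset.sum_ite_eq, Finset.mem_univ, if_true, Units.smul_def]

theorem sum_braiding_smul_u_mul_u (i j k l : Fin n) :
    ∑ r : Fin n × Fin n, braiding v n r (j, l) • (u v n i r.1 * u v n k r.2) =
      ∑ r : Fin n × Fin n, braiding v n (i, k) r • (u v n r.1 j * u v n r.2 l) := by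
  simpa only [map_sum, map_smul, map_mul, Fintype.sum_prod_type] using!
    RingQuot.mkAlgHom_rel R (Rel.rtt (v := v) i j k l)

theorem u_mul_u_exchange (i j k l : Fin n) :
    (if j = l then (q v n : R) else 1) • (u v n i l * u v n k j) +
        (if j < l then (q v n : R) - ((q v n)⁻¹ : Rˣ) else 0) • (u v n i j * u v n k l) =
      (if i = k then (q v n : R) else 1) • (u v n k j * u v n i l) +
        (if i < k then (q v n : R) - ((q v n)⁻¹ : Rˣ) else 0) • (u v n i j * u v n k l) := by
  have h := sum_braiding_smul_u_mul_u v n i j k l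
  simp only [(braiding_isSymm v n).apply (j, l)] at h
  rw [sum_braiding_smul v n (j, l) fun r => u v n i r.1 * u v n k r.2,
    sum_braiding_smul v n (i, k) fun r => u v n r.1 j * u v n r.2 l] at h
  exact smul_left_cancel _ h

theorem commute_u_of_lt_of_lt {i j k l : Fin n} (hik : i < k) (hjl : j < l) :
    Commute (u v n i l) (u v n k j) := by
  have h := u_mul_u_exchange v n i j k l
  rw [if_neg hjl.ne, if_pos hjl, if_neg hik.ne, if_pos hik, one_smul, one_smul] at h
  exact add_right_cancel h

theorem prod_u_perm_eq_prod_u_inv_perm (σ : Equiv.Perm (Fin n)) :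
    ((List.finRange n).map fun r => u v n r (σ r)).prod =
      ((List.finRange n).map fun c => u v n (σ⁻¹ c) c).prod := by
  have hcomm (i j : Fin n) (hij : i < j) (hji : σ j < σ i) :
      Commute (u v n (σ⁻¹ (σ i)) (σ i)) (u v n (σ⁻¹ (σ j)) (σ j)) := by
    simpa only [σ.symm_apply_apply, Equiv.Perm.inv_def] using commute_u_of_lt_of_lt v n hij hji
  simpa only [σ.symm_apply_apply, Equiv.Perm.inv_def] using
    prod_map_finRange_comp_perm_of_commute σ (fun c => u v n (σ⁻¹ c) c) hcomm

end QuantumMatrix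

theorem qdet_row_eq_column {R : Type*} [CommRing R] (v : Rˣ) (n : ℕ) (hn : 2 ≤ n) :
    (∑ σ : Equiv.Perm (Fin n),
        (-(QuantumMatrix.q v n : R)) ^ QuantumMatrix.invNum σ •
          ((List.finRange n).map fun r => QuantumMatrix.u v n r (σ r)).prod) =
      ∑ σ : Equiv.Perm (Fin n),
        (-(QuantumMatrix.q v n : R)) ^ QuantumMatrix.invNum σ •
          ((List.finRange n).map fun r => QuantumMatrix.u v n (σ r) r).prod := by
  refine Fintype.sum_equiv (Equiv.inv _) _ _ fun σ => ?_
  rw [Equiv.inv_apply, QuantumMatrix.invNum_inv, QuantumMatrix.prod_u_perm_eq_prod_u_inv_perm]
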